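/- For every integer r ≥ 1 and every ε > 0 there exists X > 0 such that for every fundamental negative discriminant D with |D| ≥ X one has ((r+1)/(4r) + ε) · L(1,χ_D) · log|D| + L′(1,χ_D) ≥ 0. -/

import Mathlib

/-!
Write `q = |D|`. Since `(r + 1) / (4 r) ≥ 1 / 4`, it is enough to show
`-L'(1, χ) ≤ (1 / 4 + ε) L(1, χ) log q` for large `q`, with `χ` real and primitive.

The Pólya–Vinogradov inequality (`polya_vinogradov`) bounds the character sums by
`√q (1 + log q)`. Summation by parts continues the `L`-series to `Re s > 0` and, interpolating with
the trivial bound for character sums, gives a convexity-type bound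
`L(s, χ) ≪ ‖s‖ q ^ ((1 / 2 + η) (1 - Re s + η))` (`norm_LFunction_le`).

The constant `1 / 4` then comes from a maximum principle (`half_disc_principle`) on the left half of
the disc `‖z‖ < 1 / 2`, applied to
`q ^ (z / 2) * L(1 + z) / L(1 - z) * (1 + 4 z ^ 2) * exp (4 M z + 4 M z ^ 2)`.
On the imaginary axis the quotient has modulus one because `χ` is real. On the semicircle the
convexity bound compensates `q ^ (z / 2)` up to `q ^ (2 η)`, while `1 / L(1 - z) ≪ 1 / |Re z|` is
absorbed by `1 + 4 z ^ 2`, whose modulus there is `4 |Re z|`; the last exponential, of modulus at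
most `exp (-M)`, cancels what remains. So the function is bounded by its value `1` at `0`, its
logarithmic derivative `log q / 2 + 4 M + 2 L'(1) / L(1)` has nonnegative real part there, and
`M = O(1) + 2 η log q` (with an `η`-dependent constant). The conclusion follows from `L(1, χ) > 0`.
-/

open Complex UpperHalfPlane NumberField MeasureTheory
open scoped nonZeroDivisors Real

noncomputable section

def IsFundamentalNegDiscriminant (D : ℤ) : Prop :=
  D < 0 ∧ ((D % 4 = 1 ∧ Squarefree D) ∨
    (D % 4 = 0 ∧ Squarefree (D / 4) ∧ (D / 4 % 4 = 2 ∨ D / 4 % 4 = 3)))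

def IsKroneckerChar (D : ℤ) (χ : DirichletCharacter ℂ (Int.natAbs D)) : Prop :=
  (∀ n : ZMod (Int.natAbs D), χ n = 0 ∨ χ n = 1 ∨ χ n = -1) ∧
    χ.IsPrimitive ∧ χ (-1) = -1

/-! ### The Pólya–Vinogradov inequality -/

lemma quadratic_inv_eq {q : ℕ} [NeZero q] {χ : DirichletCharacter ℂ q}
    (hreal : ∀ n : ZMod q, χ n = 0 ∨ χ n = 1 ∨ χ n = -1) : χ⁻¹ = χ := by
  ext a
  have h := hreal a
  have h0 : χ a ≠ 0 := (a.isUnit.map χ).ne_zero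
  rw [MulChar.inv_apply_eq_inv']
  rcases h with h | h | h
  · exact absurd h h0
  · rw [h]; simp
  · rw [h]; norm_num

/-- The Gauss sum of a real primitive character has modulus `√q`: applying the functional equation
`s ↦ 1 - s` twice at `s = 2` shows that the root number squares to `1`. -/
lemma norm_gaussSum_eq_sqrt {q : ℕ} [NeZero q] {χ : DirichletCharacter ℂ q}
    (hreal : ∀ n : ZMod q, χ n = 0 ∨ χ n = 1 ∨ χ n = -1) (hprim : χ.IsPrimitive) :
    ‖gaussSum χ (ZMod.stdAddChar (N := q))‖ = √(q : ℝ) := by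
  have hq0 : (q : ℂ) ≠ 0 := Nat.cast_ne_zero.mpr (NeZero.ne q)
  have hL2 : χ.completedLFunction 2 ≠ 0 := by
    intro h
    have h1 := DirichletCharacter.LFunction_eq_completed_div_gammaFactor χ 2 (Or.inl two_ne_zero)
    rw [h, zero_div] at h1
    exact DirichletCharacter.LFunction_ne_zero_of_one_le_re χ (s := 2) (Or.inr (by norm_num))
      (by norm_num) h1
  have e1 := DirichletCharacter.IsPrimitive.completedLFunction_one_sub hprim 2
  have e2 := DirichletCharacter.IsPrimitive.completedLFunction_one_sub hprim (-1)
  rw [quadratic_inv_eq hreal] at e1 e2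
  have e3 : (1 : ℂ) - -1 = 2 := by norm_num
  have e4 : (1 : ℂ) - 2 = -1 := by norm_num
  rw [e3] at e2
  rw [e4] at e1
  rw [e1] at e2
  have e5 : (q : ℂ) ^ ((-1 : ℂ) - 1 / 2) * (q : ℂ) ^ ((2 : ℂ) - 1 / 2) = 1 := by
    rw [← Complex.cpow_add _ _ hq0]; norm_num
  have hw : χ.rootNumber ^ 2 = 1 := by
    have : χ.completedLFunction 2 * (χ.rootNumber ^ 2 - 1) = 0 := by
      linear_combination (-χ.rootNumber ^ 2 * χ.completedLFunction 2) * e5 - e2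
    rcases mul_eq_zero.mp this with h | h
    · exact absurd h hL2
    · linear_combination h
  have hw1 : ‖χ.rootNumber‖ = 1 := by
    have : ‖χ.rootNumber‖ ^ 2 = 1 := by rw [← norm_pow, hw, norm_one]
    exact (pow_eq_one_iff_of_nonneg (norm_nonneg _) two_ne_zero).mp this
  have hqn : ‖(q : ℂ) ^ (1 / 2 : ℂ)‖ = √(q : ℝ) := by
    rw [Complex.norm_natCast_cpow_of_pos (NeZero.pos q), Real.sqrt_eq_rpow]; norm_num
  have hsq : 0 < √(q : ℝ) := Real.sqrt_pos.mpr (Nat.cast_pos.mpr (NeZero.pos q))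
  rw [DirichletCharacter.rootNumber, norm_div, norm_div, norm_pow, Complex.norm_I, one_pow,
    div_one, hqn, div_eq_one_iff_eq hsq.ne'] at hw1
  exact hw1

/-- Lower bound `‖e(k/q) - 1‖ ≥ 4 ‖k/q‖`, inverted and written symmetrically in `k` and `q - k`. -/
lemma two_div_norm_stdAddChar_sub_one_le {q : ℕ} [NeZero q] {k : ℕ} (hk : 0 < k) (hkq : k < q) :
    2 / ‖ZMod.stdAddChar (N := q) (k : ZMod q) - 1‖ ≤
      (q : ℝ) / 2 * ((k : ℝ)⁻¹ + ((q - k : ℕ) : ℝ)⁻¹) := by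
  have hq : (0 : ℝ) < q := Nat.cast_pos.mpr (NeZero.pos q)
  have hk' : (0 : ℝ) < k := Nat.cast_pos.mpr hk
  have hkq' : (k : ℝ) < q := Nat.cast_lt.mpr hkq
  have h1 : ‖ZMod.stdAddChar (N := q) (k : ZMod q) - 1‖ = ‖2 * Real.sin (π * (k / q))‖ := by
    have := ZMod.stdAddChar_coe (N := q) (k : ℤ)
    rw [Int.cast_natCast] at this
    rw [this, show (2 * π * Complex.I * ((k : ℤ) : ℂ) / q : ℂ) = Complex.I * ((2 * (π * (k / q)) : ℝ) : ℂ) by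
      push_cast; ring, Complex.norm_exp_I_mul_ofReal_sub_one]
    congr 3; ring
  have hx0 : 0 < (k : ℝ) / q := by positivity
  have hx1 : (k : ℝ) / q < 1 := (div_lt_one hq).mpr hkq'
  have hpi := Real.pi_pos
  rw [h1, Nat.cast_sub hkq.le]
  have hqk : (0 : ℝ) < q - k := by linarith
  have hs : ∀ y : ℝ, 0 < y → 4 * y / q ≤ ‖2 * Real.sin (π * (k / q))‖ →
      2 / ‖2 * Real.sin (π * (k / q))‖ ≤ q / 2 * y⁻¹ := by
    intro y hy h
    have h4 : 0 < 4 * y / q := by positivity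
    calc _ ≤ 2 / (4 * y / q) := div_le_div_of_nonneg_left (by norm_num) h4 h
      _ = _ := by field_simp; norm_num
  have hi1 : 0 ≤ (q : ℝ) / 2 * (k : ℝ)⁻¹ := by positivity
  have hi2 : 0 ≤ (q : ℝ) / 2 * ((q : ℝ) - k)⁻¹ := by positivity
  rw [mul_add]
  rcases le_total ((k : ℝ) / q) (1 / 2) with h | h
  · have := Real.mul_le_sin (x := π * (k / q)) (by positivity) (by nlinarith)
    have h2 : 2 / π * (π * (k / q)) = 2 * (k / q) := by field_simp
    have := hs k hk' (by
      refine le_trans ?_ (Real.le_norm_self _)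
      rw [mul_div_assoc]; linarith)
    linarith
  · have := Real.mul_le_sin (x := π - π * (k / q)) (by nlinarith) (by nlinarith)
    rw [Real.sin_pi_sub] at this
    have h2 : 2 / π * (π - π * (k / q)) = 2 * ((q - k) / q) := by field_simp
    have := hs (q - k) hqk (by
      refine le_trans ?_ (Real.le_norm_self _)
      rw [mul_div_assoc]; linarith)
    linarith

lemma sum_zmod_eq_sum_range {q : ℕ} [NeZero q] {M : Type*} [AddCommMonoid M] (f : ZMod q → M) :
    ∑ a : ZMod q, f a = ∑ k ∈ Finset.range q, f (k : ZMod q) := by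
  refine Finset.sum_nbij' ZMod.val (fun k => (k : ZMod q)) ?_ ?_ ?_ ?_ ?_
  · intro a _; exact Finset.mem_range.mpr (ZMod.val_lt a)
  · intro a _; exact Finset.mem_univ _
  · intro a _; exact ZMod.natCast_zmod_val a
  · intro a ha; exact ZMod.val_cast_of_lt (Finset.mem_range.mp ha)
  · intro a _; rw [ZMod.natCast_zmod_val]

/-- The Pólya–Vinogradov inequality for real primitive characters. -/
lemma polya_vinogradov {q : ℕ} [NeZero q] (hq1 : 1 < q) {χ : DirichletCharacter ℂ q}
    (hreal : ∀ n : ZMod q, χ n = 0 ∨ χ n = 1 ∨ χ n = -1) (hprim : χ.IsPrimitive) (N : ℕ) :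
    ‖∑ n ∈ Finset.range N, χ (n : ZMod q)‖ ≤ √(q : ℝ) * (1 + Real.log q) := by
  have hq : (0 : ℝ) < q := Nat.cast_pos.mpr (NeZero.pos q)
  set e := ZMod.stdAddChar (N := q) with he
  have h0 : χ (0 : ZMod q) = 0 := by
    have : Fact (1 < q) := ⟨hq1⟩
    exact χ.map_zero
  -- Expand `χ` in additive characters through its Gauss sum; the sums over `n` become geometric.
  have key : (∑ n ∈ Finset.range N, χ (n : ZMod q)) * gaussSum χ e =
      ∑ k ∈ Finset.range q, χ (k : ZMod q) * ∑ n ∈ Finset.range N, e (k : ZMod q) ^ n := by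
    rw [Finset.sum_mul, ← sum_zmod_eq_sum_range
      (fun a => χ a * ∑ n ∈ Finset.range N, e a ^ n)]
    simp_rw [Finset.mul_sum]
    rw [Finset.sum_comm]
    refine Finset.sum_congr rfl fun n _ => ?_
    have := gaussSum_mulShift_of_isPrimitive e hprim (n : ZMod q)
    rw [quadratic_inv_eq hreal] at this
    rw [← this, gaussSum]
    refine Finset.sum_congr rfl fun a _ => ?_
    rw [AddChar.mulShift_apply, ← nsmul_eq_mul, AddChar.map_nsmul_eq_pow]
  have hterm : ∀ k ∈ Finset.range q, ‖χ (k : ZMod q) * ∑ n ∈ Finset.range N, e (k : ZMod q) ^ n‖ ≤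
      (q : ℝ) / 2 * ((k : ℝ)⁻¹ + ((q - k : ℕ) : ℝ)⁻¹) := by
    intro k hk
    rcases Nat.eq_zero_or_pos k with rfl | hk0
    · rw [Nat.cast_zero, h0, zero_mul, norm_zero]; positivity
    have hkq := Finset.mem_range.mp hk
    refine le_trans ?_ (two_div_norm_stdAddChar_sub_one_le hk0 hkq)
    have hne : e (k : ZMod q) ≠ 1 := by
      intro h
      have := ZMod.injective_stdAddChar (N := q) (h.trans (AddChar.map_zero_eq_one e).symm)
      rw [ZMod.natCast_eq_zero_iff] at this
      exact absurd (Nat.le_of_dvd hk0 this) (by omega)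
    have hn1 : ‖e (k : ZMod q)‖ = 1 := by rw [he, ZMod.stdAddChar_apply]; exact Circle.norm_coe _
    rw [norm_mul, geom_sum_eq hne, norm_div]
    have h2 : ‖e (k : ZMod q) ^ N - 1‖ ≤ 2 := by
      refine (norm_sub_le _ _).trans ?_
      rw [norm_pow, hn1, one_pow, norm_one]; norm_num
    calc _ ≤ 1 * (‖e (k : ZMod q) ^ N - 1‖ / ‖e (k : ZMod q) - 1‖) := by
          gcongr; exact χ.norm_le_one _
      _ ≤ _ := by rw [one_mul]; gcongr
  have hinv : ∑ k ∈ Finset.range q, (k : ℝ)⁻¹ ≤ 1 + Real.log q := by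
    have h := harmonic_le_one_add_log q
    refine le_trans ?_ h
    obtain ⟨m, rfl⟩ := Nat.exists_eq_succ_of_ne_zero (NeZero.ne q)
    rw [Finset.sum_range_succ', harmonic, Finset.sum_range_succ]
    push_cast
    simp only [inv_zero, add_zero]
    have : (0:ℝ) ≤ ((m:ℝ)+1)⁻¹ := by positivity
    linarith
  have hinv' : ∑ k ∈ Finset.range q, ((q - k : ℕ) : ℝ)⁻¹ ≤ 1 + Real.log q := by
    have h := harmonic_le_one_add_log q
    refine le_trans (le_of_eq ?_) h
    rw [← Finset.sum_range_reflect, harmonic]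
    push_cast
    refine Finset.sum_congr rfl fun k hk => ?_
    have := Finset.mem_range.mp hk
    rw [show q - (q - 1 - k) = k + 1 by omega]; push_cast; rfl
  have hmain : ‖∑ n ∈ Finset.range N, χ (n : ZMod q)‖ * √(q : ℝ) ≤ q * (1 + Real.log q) := by
    rw [← norm_gaussSum_eq_sqrt hreal hprim, ← norm_mul, key]
    calc _ ≤ ∑ k ∈ Finset.range q, (q : ℝ) / 2 * ((k : ℝ)⁻¹ + ((q - k : ℕ) : ℝ)⁻¹) :=
          norm_sum_le_of_le _ hterm
      _ = (q : ℝ) / 2 * (∑ k ∈ Finset.range q, (k : ℝ)⁻¹ +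
            ∑ k ∈ Finset.range q, ((q - k : ℕ) : ℝ)⁻¹) := by
          rw [← Finset.mul_sum, Finset.sum_add_distrib]
      _ ≤ (q : ℝ) / 2 * ((1 + Real.log q) + (1 + Real.log q)) := by gcongr
      _ = _ := by ring
  have hsq : 0 < √(q : ℝ) := Real.sqrt_pos.mpr hq
  refine le_of_mul_le_mul_right (hmain.trans_eq ?_) hsq
  nth_rw 1 [← Real.mul_self_sqrt hq.le]
  ring

/-! ### Summation by parts and the convexity bound -/

lemma norm_cpow_neg_sub_le {m : ℝ} (hm : 0 < m) {s : ℂ} (hs : 0 < s.re) :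
    ‖(m : ℂ) ^ (-s) - ((m + 1 : ℝ) : ℂ) ^ (-s)‖ ≤ ‖s‖ * m ^ (-s.re - 1) := by
  have hs0 : -s ≠ 0 := by
    intro h; rw [neg_eq_zero.mp h] at hs; simp at hs
  have h1 : ∀ x ∈ Set.Icc m (m + 1),
      HasDerivWithinAt (fun y : ℝ => (y : ℂ) ^ (-s)) (-s * (x : ℂ) ^ (-s - 1))
        (Set.Icc m (m + 1)) x := by
    intro x hx
    have hx0 : x ≠ 0 := (hm.trans_le hx.1).ne'
    exact (hasDerivAt_ofReal_cpow_const hx0 hs0).hasDerivWithinAt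
  have h2 : ∀ x ∈ Set.Icc m (m + 1), ‖-s * (x : ℂ) ^ (-s - 1)‖ ≤ ‖s‖ * m ^ (-s.re - 1) := by
    intro x hx
    rw [norm_mul, norm_neg, Complex.norm_cpow_eq_rpow_re_of_pos (hm.trans_le hx.1)]
    simp only [sub_re, neg_re, one_re]
    gcongr ?_ * ?_
    exact Real.rpow_le_rpow_of_nonpos hm hx.1 (by linarith)
  have := (convex_Icc m (m + 1)).norm_image_sub_le_of_norm_hasDerivWithin_le h1 h2
    (Set.right_mem_Icc.mpr (by linarith)) (Set.left_mem_Icc.mpr (by linarith))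
  simpa using this

/-- Partial sums `∑_{k ≤ n} χ(k)`; the term `k = 0` vanishes as soon as the modulus exceeds `1`. -/
def charSum {q : ℕ} (χ : DirichletCharacter ℂ q) (n : ℕ) : ℂ :=
  ∑ k ∈ Finset.range (n + 1), χ (k : ZMod q)

/-- The terms of the Dirichlet series of `χ` after summation by parts. -/
def abelTerm {q : ℕ} (χ : DirichletCharacter ℂ q) (s : ℂ) (n : ℕ) : ℂ :=
  charSum χ (n + 1) * (((n + 1 : ℝ) : ℂ) ^ (-s) - ((n + 1 + 1 : ℝ) : ℂ) ^ (-s))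

lemma char_zero {q : ℕ} (hq1 : 1 < q) (χ : DirichletCharacter ℂ q) : χ (0 : ZMod q) = 0 := by
  have : Fact (1 < q) := ⟨hq1⟩
  exact χ.map_zero

lemma charSum_zero {q : ℕ} (hq1 : 1 < q) (χ : DirichletCharacter ℂ q) : charSum χ 0 = 0 := by
  simp [charSum, char_zero hq1]

lemma norm_charSum_le {q : ℕ} (hq1 : 1 < q) (χ : DirichletCharacter ℂ q) (n : ℕ) :
    ‖charSum χ n‖ ≤ n := by
  rw [charSum, Finset.sum_range_succ', Nat.cast_zero, char_zero hq1, add_zero]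
  refine (norm_sum_le_of_le _ fun k _ => χ.norm_le_one _).trans ?_
  simp

/-- Interpolation between the trivial bound `‖charSum χ n‖ ≤ n` and `‖charSum χ n‖ ≤ B`: the
exponent is chosen so that `n ^ (-1 - η)` is left over. -/
lemma norm_abelTerm_le {q : ℕ} (hq1 : 1 < q) {χ : DirichletCharacter ℂ q} {B : ℝ}
    (hB : ∀ n, ‖charSum χ n‖ ≤ B) {s : ℂ} (hs : 0 < s.re) {η : ℝ}
    (h0 : 0 ≤ 1 - s.re + η) (h1 : η ≤ s.re) (n : ℕ) :
    ‖abelTerm χ s n‖ ≤ ‖s‖ * B ^ (1 - s.re + η) * (1 / (n + 1 : ℝ) ^ (1 + η)) := by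
  have hm : (0 : ℝ) < n + 1 := by positivity
  have hA : ‖charSum χ (n + 1)‖ ≤ (n + 1 : ℝ) := by exact_mod_cast norm_charSum_le hq1 χ (n + 1)
  have hA0 := norm_nonneg (charSum χ (n + 1))
  have hAB : ‖charSum χ (n + 1)‖ ≤ B ^ (1 - s.re + η) * (n + 1 : ℝ) ^ (s.re - η) := by
    calc ‖charSum χ (n + 1)‖ = ‖charSum χ (n + 1)‖ ^ ((1 - s.re + η) + (s.re - η)) := by
          rw [show (1 - s.re + η) + (s.re - η) = 1 by ring, Real.rpow_one]
      _ = ‖charSum χ (n + 1)‖ ^ (1 - s.re + η) * ‖charSum χ (n + 1)‖ ^ (s.re - η) :=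
          Real.rpow_add_of_nonneg hA0 h0 (by linarith)
      _ ≤ _ := by
          have := hB (n + 1)
          have hB0 : 0 ≤ B := hA0.trans this
          gcongr
  rw [abelTerm, norm_mul]
  calc _ ≤ (B ^ (1 - s.re + η) * (n + 1 : ℝ) ^ (s.re - η)) *
        (‖s‖ * (n + 1 : ℝ) ^ (-s.re - 1)) := by
        exact mul_le_mul hAB (norm_cpow_neg_sub_le hm hs) (norm_nonneg _) (hA0.trans hAB)
    _ = ‖s‖ * B ^ (1 - s.re + η) * ((n + 1 : ℝ) ^ (s.re - η) * (n + 1 : ℝ) ^ (-s.re - 1)) := by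
        ring
    _ = _ := by
        rw [← Real.rpow_add hm, one_div, ← Real.rpow_neg hm.le]
        congr 2; ring

lemma summable_one_div_succ_rpow {x : ℝ} (hx : 0 < x) :
    Summable fun n : ℕ => 1 / (n + 1 : ℝ) ^ (1 + x) := by
  have := (summable_nat_add_iff 1).mpr (Real.summable_one_div_nat_rpow.mpr
    (show 1 < 1 + x by linarith))
  simpa using this

lemma tsum_one_div_succ_rpow_le {x : ℝ} (hx : 0 < x) :
    ∑' n : ℕ, 1 / (n + 1 : ℝ) ^ (1 + x) ≤ 1 + 1 / x := by
  have h := ZetaAsymptotics.termTSum_of_lt (s := 1 + x) (by linarith)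
  have h0 : 0 ≤ ZetaAsymptotics.termTSum (1 + x) :=
    tsum_nonneg fun n => ZetaAsymptotics.term_nonneg _ _
  rw [h, add_sub_cancel_left, sub_nonneg, one_div, inv_mul_le_iff₀ (by linarith)] at h0
  refine h0.trans_eq ?_
  field_simp
  ring

/-- Summation by parts in the half-plane of absolute convergence. -/
lemma tsum_abelTerm_of_one_lt_re {q : ℕ} [NeZero q] (hq1 : 1 < q) {χ : DirichletCharacter ℂ q}
    {B : ℝ} (hB : ∀ n, ‖charSum χ n‖ ≤ B) {s : ℂ} (hs : 1 < s.re) :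
    ∑' n, abelTerm χ s n = χ.LFunction s := by
  have hs0 : s ≠ 0 := by rintro rfl; norm_num at hs
  have hsum : Summable (abelTerm χ s) :=
    Summable.of_norm_bounded
      ((summable_one_div_succ_rpow (x := s.re) (by linarith)).mul_left (‖s‖ * B ^ (1 - s.re + s.re)))
      (norm_abelTerm_le hq1 hB (by linarith) (by linarith) le_rfl)
  have hL : HasSum (fun n : ℕ => χ ((n + 1 : ℕ) : ZMod q) * ((n + 1 : ℝ) : ℂ) ^ (-s))
      (χ.LFunction s) := by
    have h1 : HasSum (LSeries.term (χ ·) s) (LSeries (χ ·) s) :=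
      (ZMod.LSeriesSummable_of_one_lt_re χ hs).hasSum
    rw [← DirichletCharacter.LFunction_eq_LSeries χ hs] at h1
    rw [← hasSum_nat_add_iff' 1] at h1
    simp only [Finset.range_one, Finset.sum_singleton, LSeries.term_zero, sub_zero] at h1
    have hfun : (fun n : ℕ => χ ((n + 1 : ℕ) : ZMod q) * ((n + 1 : ℝ) : ℂ) ^ (-s)) =
        fun n : ℕ => LSeries.term (χ ·) s (n + 1) := by
      funext n
      rw [LSeries.term_of_ne_zero (Nat.succ_ne_zero n), Complex.cpow_neg, div_eq_mul_inv]
      push_cast; rfl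
    rw [hfun]
    exact h1
  have hpart : ∀ N : ℕ, ∑ n ∈ Finset.range N, χ ((n + 1 : ℕ) : ZMod q) * ((n + 1 : ℝ) : ℂ) ^ (-s) =
      charSum χ N * ((N + 1 : ℝ) : ℂ) ^ (-s) + ∑ n ∈ Finset.range N, abelTerm χ s n := by
    intro N
    induction N with
    | zero => simp [charSum_zero hq1]
    | succ N ih =>
      rw [Finset.sum_range_succ, Finset.sum_range_succ, ih, abelTerm]
      have : charSum χ (N + 1) = charSum χ N + χ ((N + 1 : ℕ) : ZMod q) := by
        rw [charSum, Finset.sum_range_succ, ← charSum]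
      rw [this]
      push_cast
      ring
  have hlim0 : Filter.Tendsto (fun N : ℕ => charSum χ N * ((N + 1 : ℝ) : ℂ) ^ (-s)) Filter.atTop
      (nhds 0) := by
    rw [tendsto_zero_iff_norm_tendsto_zero]
    have hb : Filter.Tendsto (fun N : ℕ => B * ((N + 1 : ℝ)) ^ (-s.re)) Filter.atTop
        (nhds (B * 0)) := by
      refine Filter.Tendsto.const_mul _ ?_
      exact (tendsto_rpow_neg_atTop (by linarith)).comp
        (Filter.tendsto_atTop_add_const_right _ _ tendsto_natCast_atTop_atTop)
    rw [mul_zero] at hb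
    refine squeeze_zero (fun N => norm_nonneg _) (fun N => ?_) hb
    rw [norm_mul, Complex.norm_cpow_eq_rpow_re_of_pos (by positivity), neg_re]
    gcongr
    exact hB N
  have hlim := hlim0.add hsum.hasSum.tendsto_sum_nat
  rw [zero_add] at hlim
  refine tendsto_nhds_unique hlim ?_
  simp_rw [← hpart]
  exact hL.tendsto_sum_nat

/-- Summation by parts represents the continued `L`-function on the whole half-plane `Re s > 0`. -/
lemma tsum_abelTerm {q : ℕ} [NeZero q] (hq1 : 1 < q) {χ : DirichletCharacter ℂ q} (hχ : χ ≠ 1)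
    {B : ℝ} (hB : ∀ n, ‖charSum χ n‖ ≤ B) {s : ℂ} (hs : 0 < s.re) :
    ∑' n, abelTerm χ s n = χ.LFunction s := by
  have hB0 : 0 ≤ B := (norm_nonneg _).trans (hB 0)
  have hopen : IsOpen {z : ℂ | 0 < z.re} := isOpen_lt continuous_const Complex.continuous_re
  have hdiff : DifferentiableOn ℂ (fun z => ∑' n, abelTerm χ z n) {z : ℂ | 0 < z.re} := by
    intro w hw
    have hw' : 0 < w.re := hw
    set U : Set ℂ := {z : ℂ | w.re / 2 < z.re} ∩ Metric.ball 0 (‖w‖ + 1) with hU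
    have hUo : IsOpen U := (isOpen_lt continuous_const Complex.continuous_re).inter Metric.isOpen_ball
    have hwU : w ∈ U := ⟨by change w.re / 2 < w.re; linarith, by simp⟩
    have : DifferentiableOn ℂ (fun z => ∑' n, abelTerm χ z n) U := by
      refine differentiableOn_tsum_of_summable_norm
        (u := fun n : ℕ => (‖w‖ + 1) * B * (1 / (n + 1 : ℝ) ^ (1 + w.re / 2)))
        ((summable_one_div_succ_rpow (by linarith)).mul_left _) (fun n => ?_) hUo ?_
      · intro z _
        refine DifferentiableAt.differentiableWithinAt ?_
        unfold abelTerm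
        have e1 : (((n : ℝ) + 1 : ℝ) : ℂ) ≠ 0 := by
          rw [Ne, Complex.ofReal_eq_zero]; positivity
        have e2 : (((n : ℝ) + 1 + 1 : ℝ) : ℂ) ≠ 0 := by
          rw [Ne, Complex.ofReal_eq_zero]; positivity
        exact ((differentiableAt_id.neg.const_cpow (Or.inl e1)).sub
          (differentiableAt_id.neg.const_cpow (Or.inl e2))).const_mul _
      · rintro n z ⟨hz1, hz2⟩
        have hz1' : w.re / 2 < z.re := hz1
        have hz2' : ‖z‖ < ‖w‖ + 1 := by simpa using hz2
        refine (norm_abelTerm_le hq1 hB (η := z.re) (by linarith) (by linarith) le_rfl n).trans ?_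
        rw [sub_add_cancel, Real.rpow_one]
        have hn1 : (1 : ℝ) ≤ n + 1 := by linarith [(Nat.cast_nonneg n : (0 : ℝ) ≤ n)]
        gcongr
    exact ((this w hwU).differentiableAt (hUo.mem_nhds hwU)).differentiableWithinAt
  have h1 : AnalyticOnNhd ℂ (fun z => ∑' n, abelTerm χ z n) {z : ℂ | 0 < z.re} :=
    hdiff.analyticOnNhd hopen
  have h2 : AnalyticOnNhd ℂ χ.LFunction {z : ℂ | 0 < z.re} :=
    (DirichletCharacter.differentiable_LFunction hχ).differentiableOn.analyticOnNhd hopen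
  have hpre : IsPreconnected {z : ℂ | 0 < z.re} := (convex_halfSpace_re_gt 0).isPreconnected
  have h2mem : (2 : ℂ) ∈ {z : ℂ | 0 < z.re} := by simp
  refine h1.eqOn_of_preconnected_of_eventuallyEq h2 hpre h2mem ?_ hs
  have : {z : ℂ | 1 < z.re} ∈ nhds (2 : ℂ) :=
    (isOpen_lt continuous_const Complex.continuous_re).mem_nhds (by simp)
  filter_upwards [this] with z hz
  exact tsum_abelTerm_of_one_lt_re hq1 hB hz

/-- The convexity bound: a bound `B` for character sums gives `L(s, χ) ≪ ‖s‖ B ^ (1 - Re s + η)`. -/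
lemma norm_LFunction_le {q : ℕ} [NeZero q] (hq1 : 1 < q) {χ : DirichletCharacter ℂ q} (hχ : χ ≠ 1)
    {B : ℝ} (hB : ∀ n, ‖charSum χ n‖ ≤ B) {s : ℂ} (hs : 0 < s.re) {η : ℝ} (hη : 0 < η)
    (h0 : 0 ≤ 1 - s.re + η) (h1 : η ≤ s.re) :
    ‖χ.LFunction s‖ ≤ ‖s‖ * B ^ (1 - s.re + η) * (1 + 1 / η) := by
  have hB0 : 0 ≤ B := (norm_nonneg _).trans (hB 0)
  rw [← tsum_abelTerm hq1 hχ hB hs]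
  refine (tsum_of_norm_bounded ((summable_one_div_succ_rpow hη).mul_left _).hasSum
    (norm_abelTerm_le hq1 hB hs h0 h1)).trans ?_
  rw [tsum_mul_left]
  gcongr
  exact tsum_one_div_succ_rpow_le hη

/-- Schwarz reflection for real `χ`, read off from the series obtained by summation by parts. -/
lemma LFunction_conj {q : ℕ} [NeZero q] (hq1 : 1 < q) {χ : DirichletCharacter ℂ q} (hχ : χ ≠ 1)
    (hreal : ∀ n : ZMod q, χ n = 0 ∨ χ n = 1 ∨ χ n = -1)
    {B : ℝ} (hB : ∀ n, ‖charSum χ n‖ ≤ B) {s : ℂ} (hs : 0 < s.re) :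
    χ.LFunction (starRingEnd ℂ s) = starRingEnd ℂ (χ.LFunction s) := by
  rw [← tsum_abelTerm hq1 hχ hB hs, ← tsum_abelTerm hq1 hχ hB (s := starRingEnd ℂ s) (by simpa),
    Complex.conj_tsum]
  congr 1
  ext n
  have hc : starRingEnd ℂ (charSum χ (n + 1)) = charSum χ (n + 1) := by
    rw [charSum, map_sum]
    refine Finset.sum_congr rfl fun k _ => ?_
    rcases hreal k with h | h | h <;> rw [h] <;> simp
  have hp : ∀ x : ℝ, 0 < x → starRingEnd ℂ ((x : ℂ) ^ (-s)) = (x : ℂ) ^ (-starRingEnd ℂ s) := by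
    intro x hx
    rw [← map_neg, Complex.cpow_conj _ _ (by rw [Complex.arg_ofReal_of_nonneg hx.le]; exact Real.pi_pos.ne),
      Complex.conj_ofReal]
  rw [abelTerm, abelTerm, map_mul, map_sub, hc, hp _ (by positivity), hp _ (by positivity)]

/-! ### Behaviour in `Re s > 1` and positivity at `1` -/

/-- The Dirichlet series `∑ μ(n) χ(n) n ^ (-s)` of `1 / L` is dominated by `ζ(Re s)`. -/
lemma norm_inv_LFunction_le {q : ℕ} [NeZero q] (χ : DirichletCharacter ℂ q) {s : ℂ}
    (hs : 1 < s.re) : ‖(χ.LFunction s)⁻¹‖ ≤ 1 + 1 / (s.re - 1) := by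
  have h := DirichletCharacter.LSeries.mul_mu_eq_one χ hs
  rw [DirichletCharacter.LFunction_eq_LSeries χ hs, inv_eq_of_mul_eq_one_right h]
  have hx : 0 < s.re - 1 := by linarith
  refine le_trans ?_ (tsum_one_div_succ_rpow_le hx)
  have hsm := (summable_one_div_succ_rpow hx).hasSum
  rw [add_sub_cancel] at hsm ⊢
  have hsm' : HasSum (fun n : ℕ => 1 / (n : ℝ) ^ s.re) (∑' n : ℕ, 1 / (n + 1 : ℝ) ^ s.re) := by
    rw [← hasSum_nat_add_iff' 1]
    simpa [Real.zero_rpow (show s.re ≠ 0 by linarith)] using hsm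
  refine tsum_of_norm_bounded hsm' fun n => ?_
  rw [LSeries.norm_term_eq]
  split_ifs with hn
  · positivity
  · gcongr
    rw [Pi.mul_apply, norm_mul]
    refine mul_le_one₀ (χ.norm_le_one _) (norm_nonneg _) ?_
    have := ArithmeticFunction.abs_moebius_le_one (n := n)
    rw [Complex.norm_intCast]
    exact_mod_cast this

/-- For `x > 1`, the product `ζ(x) L(x, χ)` is the Dirichlet series of `1 ∗ χ`, whose coefficients
are nonnegative for real `χ`. -/
lemma re_LFunction_nonneg_of_one_lt {q : ℕ} [NeZero q] {χ : DirichletCharacter ℂ q}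
    (hreal : ∀ n : ZMod q, χ n = 0 ∨ χ n = 1 ∨ χ n = -1) {x : ℝ} (hx : 1 < x) :
    0 ≤ (χ.LFunction x).re := by
  have hs : 1 < ((x : ℂ)).re := by simpa
  have hsq : χ ^ 2 = 1 := MulChar.isQuadratic_iff_sq_eq_one.mp hreal
  have hF : riemannZeta x * χ.LFunction x = LSeries χ.zetaMul x := by
    rw [DirichletCharacter.zetaMul, ← ArithmeticFunction.coe_mul, LSeries_convolution']
    · rw [χ.LFunction_eq_LSeries hs]
      congr 1
      · simp_rw [← ArithmeticFunction.LSeries_zeta_eq_riemannZeta hs, ← ArithmeticFunction.natCoe_apply]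
      · exact LSeries_congr χ.apply_eq_toArithmeticFunction_apply _
    · exact ArithmeticFunction.LSeriesSummable_zeta_iff.mpr hs
    · exact (LSeriesSummable_congr _
        fun h ↦ (χ.apply_eq_toArithmeticFunction_apply h).symm).mpr <|
        ZMod.LSeriesSummable_of_one_lt_re χ hs
  have hnn : 0 ≤ (LSeries χ.zetaMul x).re := by
    rw [LSeries, Complex.re_tsum (DirichletCharacter.LSeriesSummable_zetaMul χ hs)]
    refine tsum_nonneg fun n => ?_
    have h := LSeries.term_nonneg (a := χ.zetaMul) (n := n)
      (DirichletCharacter.zetaMul_nonneg hsq n) x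
    exact (Complex.le_def.mp h).1
  have hz : riemannZeta x = ((∑' n : ℕ, 1 / (n : ℝ) ^ x : ℝ) : ℂ) := by
    rw [zeta_eq_tsum_one_div_nat_cpow hs, Complex.ofReal_tsum]
    congr 1; ext n
    push_cast
    rw [Complex.ofReal_cpow (Nat.cast_nonneg n)]; simp
  have hzpos : 0 < ∑' n : ℕ, 1 / (n : ℝ) ^ x :=
    (Real.summable_one_div_nat_rpow.mpr hx).tsum_pos (fun n => by positivity) 1 (by simp)
  rw [← hF, hz, Complex.re_ofReal_mul] at hnn
  exact nonneg_of_mul_nonneg_right hnn hzpos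

/-- `L(1, χ) > 0`, by continuity from the right and the nonvanishing at `1`. -/
lemma LFunction_one_pos {q : ℕ} [NeZero q] (hq1 : 1 < q) {χ : DirichletCharacter ℂ q} (hχ : χ ≠ 1)
    (hreal : ∀ n : ZMod q, χ n = 0 ∨ χ n = 1 ∨ χ n = -1)
    {B : ℝ} (hB : ∀ n, ‖charSum χ n‖ ≤ B) :
    0 < (χ.LFunction 1).re ∧ (χ.LFunction 1).im = 0 := by
  have him : (χ.LFunction 1).im = 0 := by
    have h := LFunction_conj hq1 hχ hreal hB (s := 1) (by simp)
    rw [map_one] at h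
    exact Complex.conj_eq_iff_im.mp h.symm
  refine ⟨lt_of_le_of_ne ?_ ?_, him⟩
  · have hc : ContinuousWithinAt (fun x : ℝ => (χ.LFunction x).re) (Set.Ioi 1) 1 := by
      have := (DirichletCharacter.differentiable_LFunction hχ).continuous
      exact (Complex.continuous_re.comp (this.comp Complex.continuous_ofReal)).continuousWithinAt
    have := ge_of_tendsto (b := (0 : ℝ)) hc.tendsto
      (eventually_nhdsWithin_of_forall fun x hx => re_LFunction_nonneg_of_one_lt hreal hx)
    simpa using this
  · intro h
    exact DirichletCharacter.LFunction_apply_one_ne_zero hχ (Complex.ext h.symm him)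

/-! ### The maximum principle on a half-disc -/

/-- A maximum principle on the left half of the disc `‖z‖ < 1/2`. On the imaginary axis the quotient
`f (1 + z) / f (1 - z)` has modulus one; the factor `1 + 4 z ^ 2` vanishes at the corners `± I / 2`,
and the real part of `4 M z + 4 M z ^ 2` is at most `-M` on the semicircle and at most `0` on the
diameter. -/
lemma half_disc_principle {f : ℂ → ℂ} (hf : Differentiable ℂ f)
    (hconj : ∀ s : ℂ, s.re = 1 → ‖f (starRingEnd ℂ s)‖ = ‖f s‖)
    (hne : ∀ s : ℂ, 1 ≤ s.re → f s ≠ 0) {l M : ℝ} (hM : 0 ≤ M)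
    (hb : ∀ z : ℂ, ‖z‖ = 1 / 2 → z.re < 0 →
      ‖Complex.exp (z * (l / 2)) * f (1 + z) * (f (1 - z))⁻¹ * (1 + 4 * z ^ 2)‖ ≤ Real.exp M) :
    0 ≤ l / 2 + 4 * M + 2 * (deriv f 1 / f 1).re := by
  set G : ℂ → ℂ := fun z =>
    Complex.exp (z * (l / 2)) * f (1 + z) * (f (1 - z))⁻¹ * (1 + 4 * z ^ 2) with hG
  set H : ℂ → ℂ := fun z => G z * Complex.exp (4 * M * z + 4 * M * z ^ 2) with hH
  have hf1 : f 1 ≠ 0 := hne 1 (by simp)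
  have hdiff : ∀ z : ℂ, z.re ≤ 0 → DifferentiableAt ℂ H z := by
    intro z hz
    have h1 : DifferentiableAt ℂ (fun z => f (1 + z)) z :=
      (hf (1 + z)).comp z (by fun_prop)
    have h2 : DifferentiableAt ℂ (fun z => f (1 - z)) z :=
      (hf (1 - z)).comp z (by fun_prop)
    have h3 : DifferentiableAt ℂ (fun z => (f (1 - z))⁻¹) z :=
      h2.fun_inv (hne _ (by simp only [sub_re, one_re]; linarith))
    fun_prop
  set U : Set ℂ := Metric.ball 0 (1 / 2) ∩ {z : ℂ | z.re < 0} with hU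
  have hUo : IsOpen U := Metric.isOpen_ball.inter (isOpen_lt Complex.continuous_re continuous_const)
  have hcl : closure U ⊆ Metric.closedBall 0 (1 / 2) ∩ {z : ℂ | z.re ≤ 0} := by
    refine closure_minimal ?_ (Metric.isClosed_closedBall.inter
      (isClosed_le Complex.continuous_re continuous_const))
    exact Set.inter_subset_inter Metric.ball_subset_closedBall fun z (hz : z.re < 0) =>
      (show z.re ≤ 0 from hz.le)
  have hbd : Bornology.IsBounded U := Metric.isBounded_ball.subset Set.inter_subset_left
  have hDC : DiffContOnCl ℂ H U := by
    refine DifferentiableOn.diffContOnCl fun z hz => ?_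
    exact (hdiff z (hcl hz).2).differentiableWithinAt
  have hfr : ∀ z ∈ frontier U, ‖H z‖ ≤ 1 := by
    intro z hz
    rw [hUo.frontier_eq] at hz
    obtain ⟨hzc, hzU⟩ := hz
    have hz1 : ‖z‖ ≤ 1 / 2 := by simpa using (hcl hzc).1
    have hz2 : z.re ≤ 0 := (hcl hzc).2
    have hnsq : ‖z‖ ^ 2 = z.re ^ 2 + z.im ^ 2 := by
      rw [Complex.sq_norm, Complex.normSq_apply]; ring
    have hexp : ‖Complex.exp (4 * M * z + 4 * M * z ^ 2)‖ =
        Real.exp (4 * M * z.re + 4 * M * (z.re ^ 2 - z.im ^ 2)) := by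
      rw [Complex.norm_exp]
      congr 1
      simp [pow_two]
    change ‖G z * _‖ ≤ 1
    rw [norm_mul, hexp]
    rcases hz2.lt_or_eq with hneg | hzero
    · have hz3 : ‖z‖ = 1 / 2 := by
        refine le_antisymm hz1 (not_lt.mp fun h => hzU ⟨by simpa using h, hneg⟩)
      have hre : -(1 / 2) ≤ z.re := by
        have := (abs_le.mp (Complex.abs_re_le_norm z)).1
        linarith
      rw [hz3] at hnsq
      calc _ ≤ Real.exp M * Real.exp (-M) := by
            gcongr
            · exact hb z hz3 hneg
            · have him : z.im ^ 2 = 1 / 4 - z.re ^ 2 := by linarith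
              rw [him]
              nlinarith [mul_nonneg hM (mul_nonneg (neg_nonneg.mpr hz2)
                (show 0 ≤ 1 + 2 * z.re by linarith))]
        _ = 1 := by rw [← Real.exp_add]; simp
    · have hGz : ‖G z‖ ≤ 1 := by
        have hc : 1 + z = starRingEnd ℂ (1 - z) := by
          apply Complex.ext <;> simp [hzero]
        have hr : (1 - z).re = 1 := by simp [hzero]
        have hfz : f (1 - z) ≠ 0 := hne _ hr.ge
        have he : ‖Complex.exp (z * (l / 2))‖ = 1 := by
          rw [Complex.norm_exp]; simp [hzero]
        have hq : ‖1 + 4 * z ^ 2‖ ≤ 1 := by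
          have : 1 + 4 * z ^ 2 = ((1 - 4 * z.im ^ 2 : ℝ) : ℂ) := by
            apply Complex.ext <;> simp [pow_two, hzero]; ring
          rw [this, Complex.norm_real, Real.norm_eq_abs, abs_le]
          have him : z.im ^ 2 ≤ 1 / 4 := by
            rw [hzero] at hnsq; nlinarith [norm_nonneg z]
          constructor <;> nlinarith [sq_nonneg z.im]
        simp only [hG]
        rw [norm_mul, norm_mul, norm_mul, he, hc, hconj _ hr, norm_inv, one_mul,
          mul_inv_cancel₀ (norm_ne_zero_iff.mpr hfz), one_mul]
        exact hq
      calc _ ≤ 1 * Real.exp 0 := by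
            gcongr
            rw [hzero]
            nlinarith [mul_nonneg hM (sq_nonneg z.im)]
        _ = 1 := by simp
  have hH0 : H 0 = 1 := by simp [hH, hG, hf1]
  have hHle : ∀ t : ℝ, 0 < t → t < 1 / 2 → ‖H (-t : ℂ)‖ ≤ 1 := by
    intro t ht ht2
    refine Complex.norm_le_of_forall_mem_frontier_norm_le hbd hDC hfr (subset_closure ⟨?_, ?_⟩)
    · simpa [abs_of_pos ht] using ht2
    · simpa using ht
  have hD : HasDerivAt H (l / 2 + 4 * M + 2 * (deriv f 1 / f 1)) 0 := by
    have d1 : HasDerivAt (fun z => f (1 + z)) (deriv f 1) 0 := by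
      have h : HasDerivAt f (deriv f 1) (1 + 0) := by rw [add_zero]; exact (hf 1).hasDerivAt
      simpa using! h.comp (0 : ℂ) ((hasDerivAt_id (0 : ℂ)).const_add 1)
    have d2 : HasDerivAt (fun z => f (1 - z)) (-deriv f 1) 0 := by
      have h : HasDerivAt f (deriv f 1) (1 - 0) := by rw [sub_zero]; exact (hf 1).hasDerivAt
      simpa using! h.comp (0 : ℂ) ((hasDerivAt_id (0 : ℂ)).const_sub 1)
    have d3 := d2.fun_inv (by simpa using hf1)
    have d4 : HasDerivAt (fun z : ℂ => Complex.exp (z * (l / 2))) (l / 2) 0 := by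
      simpa using ((hasDerivAt_id (0 : ℂ)).mul_const ((l : ℂ) / 2)).cexp
    have d5 : HasDerivAt (fun z : ℂ => 1 + 4 * z ^ 2) 0 0 := by
      simpa using (((hasDerivAt_id (0 : ℂ)).pow 2).const_mul 4).const_add 1
    have d6 : HasDerivAt (fun z : ℂ => Complex.exp (4 * M * z + 4 * M * z ^ 2)) (4 * M) 0 := by
      have := (((hasDerivAt_id (0 : ℂ)).const_mul (4 * M : ℂ)).add
        (((hasDerivAt_id (0 : ℂ)).pow 2).const_mul (4 * M : ℂ))).cexp
      simpa using this
    have := (((d4.fun_mul d1).fun_mul d3).fun_mul d5).fun_mul d6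
    refine this.congr_deriv ?_
    simp
    field_simp
    ring
  have hR : HasDerivAt (fun t : ℝ => (H (-t : ℂ)).re)
      (-(l / 2 + 4 * M + 2 * (deriv f 1 / f 1).re)) 0 := by
    have hc : HasDerivAt (fun w : ℂ => H (-w)) (-(l / 2 + 4 * M + 2 * (deriv f 1 / f 1)))
        ((0 : ℝ) : ℂ) := by
      have h : HasDerivAt H (l / 2 + 4 * M + 2 * (deriv f 1 / f 1)) (-((0 : ℝ) : ℂ)) := by
        simpa using hD
      simpa using! h.comp _ (hasDerivAt_neg ((0 : ℝ) : ℂ))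
    have := hc.real_of_complex
    convert this using 1
    simp
  -- `‖H(-t)‖ ≤ 1 = H 0` makes the right derivative of `Re H(-t)` at `0` nonpositive.
  have hs := (hasDerivWithinAt_iff_tendsto_slope' (s := Set.Ioi (0 : ℝ)) (by simp)).mp
    (hR.hasDerivWithinAt (s := Set.Ioi 0))
  have hle := le_of_tendsto (b := (0 : ℝ)) hs (by
    filter_upwards [self_mem_nhdsWithin,
      mem_nhdsWithin_of_mem_nhds (Iio_mem_nhds (show (0 : ℝ) < 1 / 2 by norm_num))] with t ht ht2
    rw [slope_def_field]
    have ht' : 0 < t := ht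
    refine div_nonpos_of_nonpos_of_nonneg ?_ (by linarith)
    have h1 := (Complex.re_le_norm _).trans (hHle t ht' ht2)
    simp only [Complex.ofReal_zero, neg_zero, hH0, one_re]
    linarith)
  linarith

/-! ### The bound for `-L'(1, χ)` -/

/-- The semicircle estimate: Pólya–Vinogradov in the shape `B = q ^ (1 / 2 + η)` together with the
lower bound for `L` to the right of the `1`-line. -/
lemma semicircle_bound {q : ℕ} [NeZero q] (hq1 : 1 < q) {χ : DirichletCharacter ℂ q} (hχ : χ ≠ 1)
    {η : ℝ} (hη : 0 < η) (hη2 : η ≤ 1 / 2)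
    (hB : ∀ n, ‖charSum χ n‖ ≤ Real.exp ((1 / 2 + η) * Real.log q))
    {z : ℂ} (hz : ‖z‖ = 1 / 2) (hneg : z.re < 0) :
    ‖Complex.exp (z * ((Real.log q : ℝ) / 2)) * χ.LFunction (1 + z) * (χ.LFunction (1 - z))⁻¹ *
      (1 + 4 * z ^ 2)‖ ≤
      Real.exp (Real.log (9 * (1 + 1 / η)) + 2 * η * Real.log q) := by
  set l := Real.log q with hl
  have hl0 : 0 ≤ l := Real.log_natCast_nonneg q
  have hre : -(1 / 2) ≤ z.re := by
    have := (abs_le.mp (Complex.abs_re_le_norm z)).1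
    linarith
  have h1 : ‖Complex.exp (z * ((l : ℝ) / 2))‖ = Real.exp (z.re * l / 2) := by
    rw [Complex.norm_exp]
    congr 1
    have : z * ((l : ℂ) / 2) = z * ((l / 2 : ℝ) : ℂ) := by push_cast; ring
    rw [this, Complex.re_mul_ofReal]; ring
  have h2 : ‖χ.LFunction (1 + z)‖ ≤
      3 / 2 * Real.exp ((1 / 2 + η) * l * (η - z.re)) * (1 + 1 / η) := by
    have := norm_LFunction_le hq1 hχ hB (s := 1 + z) (η := η)
      (by simp only [add_re, one_re]; linarith) hη (by simp only [add_re, one_re]; linarith)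
      (by simp only [add_re, one_re]; linarith)
    refine this.trans ?_
    have hn : ‖1 + z‖ ≤ 3 / 2 := (norm_add_le _ _).trans (by rw [hz, norm_one]; norm_num)
    rw [← Real.exp_mul, show 1 - (1 + z).re + η = η - z.re by simp only [add_re, one_re]; ring]
    gcongr
  have h3 : ‖(χ.LFunction (1 - z))⁻¹‖ ≤ 1 + 1 / (-z.re) := by
    have := norm_inv_LFunction_le χ (s := 1 - z) (by simp only [sub_re, one_re]; linarith)
    refine this.trans_eq ?_
    simp
  have h4 : ‖1 + 4 * z ^ 2‖ = 4 * (-z.re) := by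
    have hzz : z * starRingEnd ℂ z = 1 / 4 := by
      rw [Complex.mul_conj, Complex.normSq_eq_norm_sq, hz]; push_cast; norm_num
    have : 1 + 4 * z ^ 2 = ((8 * z.re : ℝ) : ℂ) * z := by
      have hadd := Complex.add_conj z
      push_cast at hadd ⊢
      linear_combination (-4) * hzz + (4 * z) * hadd
    rw [this, norm_mul, Complex.norm_real, Real.norm_eq_abs, abs_of_neg (by linarith), hz]
    ring
  have h34 : ‖(χ.LFunction (1 - z))⁻¹‖ * ‖1 + 4 * z ^ 2‖ ≤ 6 := by
    rw [h4]
    calc _ ≤ (1 + 1 / (-z.re)) * (4 * (-z.re)) := by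
          gcongr
          linarith
      _ = 4 * (-z.re) + 4 := by
          have : z.re ≠ 0 := hneg.ne
          field_simp
          ring
      _ ≤ 6 := by linarith
  have h12 : Real.exp (z.re * l / 2) * Real.exp ((1 / 2 + η) * l * (η - z.re)) ≤
      Real.exp (2 * η * l) := by
    rw [← Real.exp_add]
    refine Real.exp_le_exp.mpr ?_
    have : z.re * l / 2 + (1 / 2 + η) * l * (η - z.re) = (η * (1 / 2 + η - z.re)) * l := by ring
    rw [this]
    refine mul_le_mul_of_nonneg_right ?_ hl0
    nlinarith
  have hη1 : 0 < 1 + 1 / η := by positivity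
  rw [norm_mul, norm_mul, norm_mul, mul_assoc, h1, Real.exp_add, Real.exp_log (by positivity)]
  calc _ ≤ (Real.exp (z.re * l / 2) *
        (3 / 2 * Real.exp ((1 / 2 + η) * l * (η - z.re)) * (1 + 1 / η))) * 6 := by
        gcongr
    _ = 9 * (1 + 1 / η) * (Real.exp (z.re * l / 2) *
          Real.exp ((1 / 2 + η) * l * (η - z.re))) := by ring
    _ ≤ _ := by gcongr

/-- The bound `-L'(1, χ) ≤ (1 / 4 + o(1)) L(1, χ) log q`, with explicit error terms. -/
lemma neg_deriv_LFunction_le {q : ℕ} [NeZero q] (hq1 : 1 < q) {χ : DirichletCharacter ℂ q}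
    (hχ : χ ≠ 1) (hreal : ∀ n : ZMod q, χ n = 0 ∨ χ n = 1 ∨ χ n = -1) (hprim : χ.IsPrimitive)
    {η : ℝ} (hη : 0 < η) (hη2 : η ≤ 1 / 2)
    (hlog : 1 + Real.log q ≤ Real.exp (η * Real.log q)) :
    0 < (χ.LFunction 1).re ∧
    0 ≤ (Real.log q / 4 + 2 * (Real.log (9 * (1 + 1 / η)) + 2 * η * Real.log q)) *
      (χ.LFunction 1).re + (deriv χ.LFunction 1).re := by
  have hq : (0 : ℝ) < q := Nat.cast_pos.mpr (NeZero.pos q)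
  have hl0 : 0 ≤ Real.log q := Real.log_natCast_nonneg q
  have hB : ∀ n, ‖charSum χ n‖ ≤ Real.exp ((1 / 2 + η) * Real.log q) := by
    intro n
    refine (polya_vinogradov hq1 hreal hprim (n + 1)).trans ?_
    rw [add_mul, Real.exp_add, show Real.exp (1 / 2 * Real.log q) = √(q : ℝ) by
      rw [Real.sqrt_eq_rpow, Real.rpow_def_of_pos hq, mul_comm]]
    gcongr
  obtain ⟨hpos, him⟩ := LFunction_one_pos hq1 hχ hreal hB
  refine ⟨hpos, ?_⟩
  have hM : 0 ≤ Real.log (9 * (1 + 1 / η)) + 2 * η * Real.log q := by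
    have : 0 ≤ Real.log (9 * (1 + 1 / η)) := by
      refine Real.log_nonneg ?_
      have : 0 < 1 / η := by positivity
      linarith
    positivity
  have key := half_disc_principle (DirichletCharacter.differentiable_LFunction hχ)
    (fun s hs => by rw [LFunction_conj hq1 hχ hreal hB (by linarith), Complex.norm_conj])
    (fun s hs => DirichletCharacter.LFunction_ne_zero_of_one_le_re χ (Or.inl hχ) hs)
    (l := Real.log q) hM
    (fun z hz hneg => semicircle_bound hq1 hχ hη hη2 hB hz hneg)
  have hLr : χ.LFunction 1 = (((χ.LFunction 1).re : ℝ) : ℂ) := Complex.ext (by simp) (by simp [him])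
  rw [hLr, Complex.div_ofReal_re] at key
  have h2 := mul_nonneg key hpos.le
  have h3 : (Real.log q / 2 + 4 * (Real.log (9 * (1 + 1 / η)) + 2 * η * Real.log q) +
      2 * ((deriv χ.LFunction 1).re / (χ.LFunction 1).re)) * (χ.LFunction 1).re =
      2 * ((Real.log q / 4 + 2 * (Real.log (9 * (1 + 1 / η)) + 2 * η * Real.log q)) *
      (χ.LFunction 1).re + (deriv χ.LFunction 1).re) := by
    field_simp
    ring
  rw [h3] at h2
  linarith

theorem thm5 :
    ∀ r : ℕ, 1 ≤ r → ∀ ε : ℝ, 0 < ε → ∃ X : ℝ, 0 < X ∧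
      ∀ D : ℤ, IsFundamentalNegDiscriminant D → X ≤ (Int.natAbs D : ℝ) →
      ∀ [NeZero (Int.natAbs D)],
      ∀ χD : DirichletCharacter ℂ (Int.natAbs D), IsKroneckerChar D χD →
        0 ≤ (((r : ℝ) + 1) / (4 * r) + ε) * (χD.LFunction 1).re *
              Real.log (Int.natAbs D) + (deriv χD.LFunction 1).re := by
  intro r hr ε hε
  set η : ℝ := min (ε / 8) (1 / 2) with hηdef
  have hη : 0 < η := lt_min (by linarith) (by norm_num)
  have hη2 : η ≤ 1 / 2 := min_le_right _ _
  have hηε : η ≤ ε / 8 := min_le_left _ _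
  -- `2 / η ^ 2` makes `1 + log q ≤ q ^ η`; the other term absorbs `log (9 (1 + 1 / η))`.
  set l₀ : ℝ := max (2 / η ^ 2) (4 / ε * Real.log (9 * (1 + 1 / η))) with hl₀
  refine ⟨Real.exp l₀, Real.exp_pos _, ?_⟩
  intro D _ hX _ χ hχ
  obtain ⟨hreal, hprim, hodd⟩ := hχ
  generalize D.natAbs = q at *
  have hq : (0 : ℝ) < q := (Real.exp_pos _).trans_le hX
  have hl : l₀ ≤ Real.log q := (Real.le_log_iff_exp_le hq).mpr hX
  have hla : 2 / η ^ 2 ≤ Real.log q := (le_max_left _ _).trans hl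
  have hlb : 4 / ε * Real.log (9 * (1 + 1 / η)) ≤ Real.log q := (le_max_right _ _).trans hl
  have hlpos : 0 < Real.log q := lt_of_lt_of_le (by positivity) hla
  have hq1 : 1 < q := by
    have := (Real.log_pos_iff hq.le).mp hlpos
    exact_mod_cast this
  have hχ1 : χ ≠ 1 := by
    rintro rfl
    rw [MulChar.one_apply isUnit_one.neg] at hodd
    norm_num at hodd
  have hlog : 1 + Real.log q ≤ Real.exp (η * Real.log q) := by
    have h := Real.quadratic_le_exp_of_nonneg (mul_nonneg hη.le hlpos.le)
    have h2 : 2 ≤ η ^ 2 * Real.log q := by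
      rwa [div_le_iff₀ (by positivity), mul_comm] at hla
    nlinarith [mul_le_mul_of_nonneg_right h2 hlpos.le, mul_nonneg hη.le hlpos.le]
  obtain ⟨hpos, hmain⟩ := neg_deriv_LFunction_le hq1 hχ1 hreal hprim hη hη2 hlog
  refine hmain.trans ?_
  have hr' : (1 : ℝ) ≤ r := by exact_mod_cast hr
  -- The coefficient of the claim exceeds `1 / 4` for every `r`, so the bound with `1 / 4` suffices.
  have hcoef : 1 / 4 ≤ ((r : ℝ) + 1) / (4 * r) := by
    rw [div_le_div_iff₀ (by norm_num) (by positivity)]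
    linarith
  have hlb' : Real.log (9 * (1 + 1 / η)) ≤ ε / 4 * Real.log q := by
    calc _ = ε / 4 * (4 / ε * Real.log (9 * (1 + 1 / η))) := by field_simp
      _ ≤ _ := by gcongr
  have hsum : Real.log q / 4 + 2 * (Real.log (9 * (1 + 1 / η)) + 2 * η * Real.log q) ≤
      (((r : ℝ) + 1) / (4 * r) + ε) * Real.log q := by
    have h1 := mul_le_mul_of_nonneg_right hcoef hlpos.le
    have h2 := mul_le_mul_of_nonneg_right hηε hlpos.le
    linarith
  have := mul_le_mul_of_nonneg_right hsum hpos.le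
  linarith

end
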